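/- Let n, k ∈ ℕ and let M_0 ⊊ M_1 ⊊ ⋯ ⊊ M_k be a strictly increasing chain of ℚ[x]-submodules of ℚ[x]^n, all having the same rank r ≤ n. Assume that M_0 is generated by a finite collection of vectors all of whose entries are polynomials of degree at most d. Then k ≤ d·r. -/

import Mathlib

open Polynomial in
/-- The vectors in `M` with entries of degree `< D`. -/
noncomputable def truncMod {n : ℕ} (M : Submodule ℚ[X] (Fin n → ℚ[X])) (D : ℕ) :
    Submodule ℚ (Fin n → ℚ[X]) :=
  M.restrictScalars ℚ ⊓ Submodule.pi Set.univ (fun _ => degreeLT ℚ D)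

open Polynomial in
theorem mem_truncMod {n : ℕ} (M : Submodule ℚ[X] (Fin n → ℚ[X])) (D : ℕ) (v : Fin n → ℚ[X]) :
    v ∈ truncMod M D ↔ v ∈ M ∧ ∀ j, (v j).degree < D := by
  simp [truncMod, Submodule.mem_pi, mem_degreeLT]

open Polynomial in
/-- Coefficient of degree `D` as a linear map. -/
noncomputable def coeffVec (n D : ℕ) : (Fin n → ℚ[X]) →ₗ[ℚ] (Fin n → ℚ) :=
  LinearMap.pi (fun j => (lcoeff ℚ D).comp (LinearMap.proj j))

open Polynomial in
theorem linInd_of_top {n : ℕ} {ι : Type} [Fintype ι] (D : ℕ) (v : ι → Fin n → ℚ[X])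
    (hv : ∀ i j, (v i j).degree < (D + 1 : ℕ))
    (h : LinearIndependent ℚ (fun i => coeffVec n D (v i))) :
    LinearIndependent ℚ[X] v := by
  rw [Fintype.linearIndependent_iff] at h ⊢
  intro g hg
  by_contra! hne
  obtain ⟨i0, hi0⟩ := hne
  obtain ⟨i1, -, hi1⟩ := Finset.exists_max_image Finset.univ (fun i => (g i).degree)
    ⟨i0, Finset.mem_univ _⟩
  have h1 : g i1 ≠ 0 := by
    intro h0
    have := hi1 i0 (Finset.mem_univ _)
    simp only [h0, degree_zero, le_bot_iff, degree_eq_bot] at this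
    exact hi0 this
  have key := h (fun i => (g i).coeff (g i1).natDegree) (by
    ext j
    have hj := congrArg (fun p : ℚ[X] => p.coeff ((g i1).natDegree + D)) (congrFun hg j)
    simp only [Finset.sum_apply, Pi.smul_apply, smul_eq_mul, finsetSum_coeff, Pi.zero_apply,
      coeff_zero] at hj
    simp only [Finset.sum_apply, Pi.smul_apply, smul_eq_mul, Pi.zero_apply]
    rw [← hj]
    refine Finset.sum_congr rfl fun i _ => ?_
    rw [coeff_mul_add_eq_of_natDegree_le]
    · simp [coeffVec]
    · exact natDegree_le_natDegree (hi1 i (Finset.mem_univ _))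
    · have := hv i j
      by_cases hz : v i j = 0
      · simp [hz]
      · have := (natDegree_lt_iff_degree_lt hz).2 this
        omega) i1
  simp at key
  exact h1 key

open Polynomial in
theorem coeffVec_apply (n D : ℕ) (v : Fin n → ℚ[X]) (j : Fin n) :
    coeffVec n D v j = (v j).coeff D := by
  simp [coeffVec]

open Polynomial in
theorem truncMod_zero {n : ℕ} (M : Submodule ℚ[X] (Fin n → ℚ[X])) : truncMod M 0 = ⊥ := by
  rw [eq_bot_iff]
  intro v hv
  rw [mem_truncMod] at hv
  rw [Submodule.mem_bot]
  ext1 j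
  have := hv.2 j
  simpa [Nat.WithBot.lt_zero_iff] using this

open Polynomial in
theorem mem_truncMod_of_coeff {n : ℕ} (M : Submodule ℚ[X] (Fin n → ℚ[X])) (D : ℕ)
    (v : Fin n → ℚ[X]) (hv : v ∈ truncMod M (D + 1)) (hk : coeffVec n D v = 0) :
    v ∈ truncMod M D := by
  rw [mem_truncMod] at hv ⊢
  refine ⟨hv.1, fun j => ?_⟩
  have h0 : (v j).coeff D = 0 := by
    rw [← coeffVec_apply, hk, Pi.zero_apply]
  rw [degree_lt_iff_coeff_zero]
  intro m hm
  rcases hm.eq_or_lt with h | hm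
  · rw [← h]
    exact h0
  · exact (degree_lt_iff_coeff_zero _ _).1 (hv.2 j) m hm

open Polynomial in
/-- The top coefficient map on the truncation. -/
noncomputable def topMap {n : ℕ} (M : Submodule ℚ[X] (Fin n → ℚ[X])) (D : ℕ) :
    truncMod M (D + 1) →ₗ[ℚ] (Fin n → ℚ) :=
  (coeffVec n D).comp (Submodule.subtype _)

open Polynomial in
theorem topMap_apply {n : ℕ} (M : Submodule ℚ[X] (Fin n → ℚ[X])) (D : ℕ)
    (w : truncMod M (D + 1)) : topMap M D w = coeffVec n D (w : Fin n → ℚ[X]) := rfl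

open Polynomial in
theorem rank_range_topMap {n : ℕ} (M : Submodule ℚ[X] (Fin n → ℚ[X])) (D : ℕ) :
    Module.finrank ℚ (LinearMap.range (topMap M D)) ≤ Module.finrank ℚ[X] M := by
  let b := Module.finBasis ℚ (LinearMap.range (topMap M D))
  choose w hw using fun i => LinearMap.mem_range.1 (b i).2
  have hli : LinearIndependent ℚ[X] (fun i => (w i : Fin n → ℚ[X])) := by
    apply linInd_of_top D
    · intro i j
      exact ((mem_truncMod _ _ _).1 (w i).2).2 j
    · have := b.linearIndependent.map' (Submodule.subtype _) (Submodule.ker_subtype _)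
      have he : (fun i => coeffVec n D (w i : Fin n → ℚ[X])) =
          (LinearMap.range (topMap M D)).subtype ∘ b := by
        funext i
        rw [← topMap_apply, hw i]
        rfl
      rw [he]
      exact this
  have hli2 : LinearIndependent ℚ[X]
      (fun i => (⟨w i, ((mem_truncMod _ _ _).1 (w i).2).1⟩ : M)) :=
    LinearIndependent.of_comp M.subtype hli
  have h3 := hli2.fintype_card_le_finrank
  rwa [Fintype.card_fin] at h3

open Polynomial in
theorem rank_ker_topMap {n : ℕ} (M : Submodule ℚ[X] (Fin n → ℚ[X])) (D : ℕ) :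
    Module.rank ℚ (LinearMap.ker (topMap M D)) ≤ Module.rank ℚ (truncMod M D) := by
  rw [(Submodule.equivSubtypeMap (truncMod M (D + 1)) (LinearMap.ker (topMap M D))).rank_eq]
  refine Submodule.rank_mono ?_
  rintro _ ⟨x, hx, rfl⟩
  refine mem_truncMod_of_coeff M D _ x.2 ?_
  rw [Submodule.subtype_apply, ← topMap_apply]
  exact LinearMap.mem_ker.1 hx

open Polynomial in
theorem rank_truncMod_le {n : ℕ} (M : Submodule ℚ[X] (Fin n → ℚ[X])) (D : ℕ) :
    Module.rank ℚ (truncMod M D) ≤ ((Module.finrank ℚ[X] M * D : ℕ) : Cardinal) := by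
  induction D with
  | zero =>
    rw [truncMod_zero]
    simp
  | succ D ih =>
    have hr := LinearMap.rank_range_add_rank_ker (topMap M D)
    rw [← hr, Nat.mul_succ, Nat.cast_add, add_comm (Nat.cast (_ * D))]
    refine add_le_add ?_ ((rank_ker_topMap M D).trans ih)
    rw [← Module.finrank_eq_rank, Nat.cast_le]
    exact rank_range_topMap M D

open Polynomial in
theorem le_finrank_truncMod {n r : ℕ} (M : Submodule ℚ[X] (Fin n → ℚ[X])) (d E : ℕ)
    {ι : Type} [Fintype ι] (v : ι → Fin n → ℚ[X]) (hM : ∀ i, v i ∈ M)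
    (hv : ∀ i j, (v i j).natDegree ≤ d) (hli : LinearIndependent ℚ[X] v)
    (hr : r ≤ Fintype.card ι) [Module.Finite ℚ (truncMod M (E + d))] :
    r * E ≤ Module.finrank ℚ (truncMod M (E + d)) := by
  let f : (ι → degreeLT ℚ E) →ₗ[ℚ] (Fin n → ℚ[X]) :=
    ((Fintype.linearCombination ℚ[X] v).restrictScalars ℚ).comp
      (LinearMap.pi fun i => (Submodule.subtype _).comp (LinearMap.proj i))
  have hf : ∀ g, f g = ∑ i, (g i : ℚ[X]) • v i := fun g => by
    simp [f, Fintype.linearCombination_apply]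
  let F : (ι → degreeLT ℚ E) →ₗ[ℚ] truncMod M (E + d) := LinearMap.codRestrict _ f (by
    intro g
    rw [mem_truncMod, hf]
    refine ⟨M.sum_mem fun i _ => M.smul_mem _ (hM i), fun j => ?_⟩
    rw [← mem_degreeLT, Finset.sum_apply]
    refine Submodule.sum_mem _ fun i _ => ?_
    rw [mem_degreeLT, degree_lt_iff_coeff_zero]
    intro m hm
    have hg := mem_degreeLT.1 (g i).2
    simp only [Pi.smul_apply, smul_eq_mul]
    by_cases hz : (g i : ℚ[X]) = 0
    · simp [hz]
    have := (natDegree_lt_iff_degree_lt hz).2 hg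
    apply coeff_eq_zero_of_natDegree_lt
    have h2 := natDegree_mul_le (p := (g i : ℚ[X])) (q := v i j)
    have := hv i j
    omega)
  have hF : Function.Injective F := by
    intro a b hab
    have h1 : f a = f b := congrArg Subtype.val hab
    have h2 : (fun i => (a i : ℚ[X])) = fun i => (b i : ℚ[X]) := by
      apply hli.fintypeLinearCombination_injective
      simpa [hf, Fintype.linearCombination_apply] using h1
    ext1 i
    exact Subtype.ext (congrFun h2 i)
  have hle := LinearMap.finrank_le_finrank_of_injective hF
  have : Module.Finite ℚ (degreeLT ℚ E) := Module.Finite.equiv (degreeLTEquiv ℚ E).symm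
  rw [Module.finrank_pi_fintype, (degreeLTEquiv ℚ E).finrank_eq] at hle
  simp at hle
  exact (Nat.mul_le_mul_right E hr).trans hle

open Polynomial in
theorem exists_indep {n : ℕ} (S : Finset (Fin n → ℚ[X])) :
    ∃ T : Finset (Fin n → ℚ[X]), T ⊆ S ∧ LinearIndependent ℚ[X] (fun i : T => (i : Fin n → ℚ[X])) ∧
      Module.finrank ℚ[X] (Submodule.span ℚ[X] (S : Set (Fin n → ℚ[X]))) ≤ T.card := by
  classical
  obtain ⟨s, hs, hmax⟩ := exists_maximal_linearIndepOn ℚ[X]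
    (fun i : S => (i : Fin n → ℚ[X]))
  let T : Finset (Fin n → ℚ[X]) := (Set.toFinset s).image Subtype.val
  have hT : (T : Set (Fin n → ℚ[X])) = (fun i : S => (i : Fin n → ℚ[X])) '' s := by simp [T]
  have hli : LinearIndependent ℚ[X] (fun i : T => (i : Fin n → ℚ[X])) := by
    have := hs.id_image
    rw [← hT] at this
    exact this
  refine ⟨T, ?_, hli, ?_⟩
  · intro x hx
    simp only [T, Finset.mem_image] at hx
    obtain ⟨y, -, rfl⟩ := hx
    exact y.2
  have hex : ∀ i : S, ∃ a : ℚ[X], a ≠ 0 ∧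
      a • (i : Fin n → ℚ[X]) ∈ Submodule.span ℚ[X] (T : Set (Fin n → ℚ[X])) := by
    intro i
    rw [hT]
    by_cases hi : i ∈ s
    · exact ⟨1, one_ne_zero, by
        rw [one_smul]; exact Submodule.subset_span ⟨i, hi, rfl⟩⟩
    · exact hmax i hi
  choose a ha0 ha using hex
  let A := ∏ i, a i
  have hA : A ≠ 0 := Finset.prod_ne_zero_iff.2 fun i _ => ha0 i
  have hmem : ∀ x ∈ Submodule.span ℚ[X] (S : Set (Fin n → ℚ[X])),
      A • x ∈ Submodule.span ℚ[X] (T : Set (Fin n → ℚ[X])) := by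
    intro x hx
    have : Submodule.span ℚ[X] (S : Set (Fin n → ℚ[X])) ≤
      (Submodule.span ℚ[X] (T : Set (Fin n → ℚ[X]))).comap (LinearMap.lsmul ℚ[X] _ A) := by
      rw [Submodule.span_le]
      intro y hy
      obtain ⟨c, hc⟩ : a ⟨y, hy⟩ ∣ A := Finset.dvd_prod_of_mem a (Finset.mem_univ _)
      change A • y ∈ Submodule.span ℚ[X] (T : Set (Fin n → ℚ[X]))
      rw [hc, mul_comm, mul_smul]
      exact Submodule.smul_mem _ _ (ha ⟨y, hy⟩)
    exact this hx
  let F : Submodule.span ℚ[X] (S : Set (Fin n → ℚ[X])) →ₗ[ℚ[X]]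
      Submodule.span ℚ[X] (T : Set (Fin n → ℚ[X])) :=
    LinearMap.codRestrict _ ((LinearMap.lsmul ℚ[X] _ A).comp (Submodule.subtype _))
      (fun x => hmem x x.2)
  have hF : Function.Injective F := by
    intro x y hxy
    have : A • (x : Fin n → ℚ[X]) = A • (y : Fin n → ℚ[X]) := congrArg Subtype.val hxy
    exact Subtype.ext (smul_right_injective _ hA this)
  exact (LinearMap.finrank_le_finrank_of_injective hF).trans (finrank_span_finset_le_card T)


/-- Let `M 0 ⊊ M 1 ⊊ ⋯ ⊊ M k` be a strictly increasing chain of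
`ℚ[x]`-submodules of `ℚ[x]^n`, all of rank `r ≤ n`.  If `M 0` is generated by a finite
collection of vectors whose entries are polynomials of degree at most `d`, then
`k ≤ d·r`. -/
theorem polynomial_chain_length_le
    (n k r d : ℕ) (hrn : r ≤ n)
    (M : ℕ → Submodule (Polynomial ℚ) (Fin n → Polynomial ℚ))
    (hchain : ∀ i < k, M i < M (i + 1))
    (hrank : ∀ i ≤ k, Module.finrank (Polynomial ℚ) (M i) = r)
    (S : Finset (Fin n → Polynomial ℚ))
    (hgen : M 0 = Submodule.span (Polynomial ℚ) (S : Set (Fin n → Polynomial ℚ)))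
    (hdeg : ∀ v ∈ S, ∀ j, (v j).natDegree ≤ d) :
    k ≤ d * r := by
  classical
  have hfin : ∀ i D, Module.Finite ℚ (truncMod (M i) D) := fun i D =>
    Module.rank_lt_aleph0_iff.1 ((rank_truncMod_le (M i) D).trans_lt (Cardinal.natCast_lt_aleph0))
  have hw : ∀ i, ∃ w, i < k → w ∈ M (i + 1) ∧ w ∉ M i := by
    intro i
    by_cases hi : i < k
    · obtain ⟨w, h1, h2⟩ := SetLike.exists_of_lt (hchain i hi)
      exact ⟨w, fun _ => ⟨h1, h2⟩⟩
    · exact ⟨0, fun h => absurd h hi⟩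
  choose w hw using hw
  let E := (∑ i ∈ Finset.range k, ∑ j, (w i j).natDegree) + 1
  have hE : ∀ i < k, ∀ j, (w i j).natDegree < E := by
    intro i hi j
    have h1 : (w i j).natDegree ≤ ∑ j, (w i j).natDegree :=
      Finset.single_le_sum (f := fun j => (w i j).natDegree) (fun _ _ => Nat.zero_le _)
        (Finset.mem_univ j)
    have h2 : ∑ j, (w i j).natDegree ≤ ∑ i ∈ Finset.range k, ∑ j, (w i j).natDegree :=
      Finset.single_le_sum (f := fun i => ∑ j, (w i j).natDegree) (fun _ _ => Nat.zero_le _)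
        (Finset.mem_range.2 hi)
    omega
  have hstep : ∀ i ≤ k, Module.finrank ℚ (truncMod (M 0) (E + d)) + i ≤
      Module.finrank ℚ (truncMod (M i) (E + d)) := by
    intro i
    induction i with
    | zero => intro _; simp
    | succ i ih =>
      intro hi
      have h1 := ih (by omega)
      have hlt : truncMod (M i) (E + d) < truncMod (M (i + 1)) (E + d) := by
        refine SetLike.lt_iff_le_and_exists.2 ⟨?_, w i, ?_, ?_⟩
        · intro x hx
          rw [mem_truncMod] at hx ⊢
          exact ⟨(hchain i hi).le hx.1, hx.2⟩
        · rw [mem_truncMod]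
          refine ⟨(hw i hi).1, fun j => ?_⟩
          refine Polynomial.degree_le_natDegree.trans_lt ?_
          have := hE i hi j
          exact_mod_cast (by omega : (w i j).natDegree < E + d)
        · rw [mem_truncMod]
          exact fun h => (hw i hi).2 h.1
      have := hfin (i + 1) (E + d)
      have h2 := Submodule.finrank_lt_finrank_of_lt hlt
      omega
  obtain ⟨T, hTS, hli, hcard⟩ := exists_indep S
  rw [← hgen, hrank 0 (Nat.zero_le _)] at hcard
  have := hfin 0 (E + d)
  have hlow := le_finrank_truncMod (r := r) (M 0) d E (fun i : T => (i : Fin n → Polynomial ℚ))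
    (fun i => by rw [hgen]; exact Submodule.subset_span (hTS i.2))
    (fun i j => hdeg i (hTS i.2) j) hli (by simpa using hcard)
  have hup := rank_truncMod_le (M k) (E + d)
  have := hfin k (E + d)
  rw [← Module.finrank_eq_rank, Nat.cast_le, hrank k le_rfl] at hup
  have := hstep k le_rfl
  nlinarith
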